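/- arXiv:2507.06127 — 4 statements merged into one kernel-verified Lean document; each statement's English description precedes it below -/
import Mathlib

section
/- For all natural numbers a, b and every index i, Nat.testBit (a + b) i = (p i).xor (c i); that is, each sum bit of a + b equals the XOR of the propagate signal and the incoming carry at that position. -/
/-- Propagate signal at bit `i` for the addition of `a` and `b`. -/
def p (a b : ℕ) (i : ℕ) : Bool := (Nat.testBit a i).xor (Nat.testBit b i)

/-- Generate signal at bit `i` for the addition of `a` and `b`. -/
def g (a b : ℕ) (i : ℕ) : Bool := Nat.testBit a i && Nat.testBit b i

/-- Carry sequence: `c 0 = false`, `c (i+1) = g i || (p i && c i)`. -/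
def c (a b : ℕ) : ℕ → Bool
  | 0 => false
  | i + 1 => g a b i || (p a b i && c a b i)

/-- The carry invariant: shifting the sum equals the sum of the shifts plus the carry. -/
theorem add_div_two_pow_carry (a b i : ℕ) :
    (a + b) / 2 ^ i = a / 2 ^ i + b / 2 ^ i + (c a b i).toNat := by
  induction i with
  | zero => simp [c]
  | succ i ih =>
    rw [pow_succ, ← Nat.div_div_eq_div_mul, ← Nat.div_div_eq_div_mul,
      ← Nat.div_div_eq_div_mul, ih]
    simp only [c, g, p, Nat.testBit_eq_decide_div_mod_eq]
    generalize a / 2 ^ i = x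
    generalize b / 2 ^ i = y
    rcases Nat.mod_two_eq_zero_or_one x with hx | hx <;>
    rcases Nat.mod_two_eq_zero_or_one y with hy | hy <;>
    cases c a b i <;> simp [hx, hy] <;> omega

theorem testBit_add_eq_xor (a b i : ℕ) :
    Nat.testBit (a + b) i = (p a b i).xor (c a b i) := by
  simp only [p, Nat.testBit_eq_decide_div_mod_eq, add_div_two_pow_carry]
  generalize a / 2 ^ i = x
  generalize b / 2 ^ i = y
  rcases Nat.mod_two_eq_zero_or_one x with hx | hx <;>
  rcases Nat.mod_two_eq_zero_or_one y with hy | hy <;>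
  cases c a b i <;> simp [hx, hy] <;> omega
end

section
/- For every list L : List (Bool × Bool) and every cin : Bool, co (L.foldr (· o ·) (false, true)) cin = L.foldr (fun x c => co x c) cin; that is, combining an arbitrary list of (generate, propagate) pairs with the prefix operator and then applying the carry-in gives the same result as rippling the carry through the list element by element. In particular (false, true) acts as an identity for this carry computation. -/
/-- The prefix operator `o` on (generate, propagate) pairs. -/
def prefixOp (x y : Bool × Bool) : Bool × Bool :=
  (x.1 || (x.2 && y.1), x.2 && y.2)

/-- The carry-out of a (generate, propagate) pair given a carry-in. -/
def co (x : Bool × Bool) (cin : Bool) : Bool :=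
  x.1 || (x.2 && cin)

theorem co_prefixOp (x y : Bool × Bool) (c : Bool) :
    co (prefixOp x y) c = co x (co y c) := by
  obtain ⟨a, b⟩ := x
  obtain ⟨d, e⟩ := y
  cases a <;> cases b <;> cases d <;> cases e <;> cases c <;> rfl

theorem co_foldr_prefixOp (L : List (Bool × Bool)) (cin : Bool) :
    co (L.foldr (fun x y => prefixOp x y) (false, true)) cin
      = L.foldr (fun x c => co x c) cin := by
  induction L with
  | nil => simp [co]
  | cons x L ih =>
    rw [List.foldr_cons, List.foldr_cons, ← ih, co_prefixOp]
end

section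
/- For every list L : List (Bool × Bool), the generate component of the fold satisfies: (L.foldr (· o ·) (false, true)).1 = true if and only if there exists an index k < L.length such that (L.get k).1 = true and for all m < k, (L.get m).2 = true; that is, the group generates a carry exactly when some position generates and all more significant positions in the group propagate. -/
theorem foldr_prefixOp_generate (L : List (Bool × Bool)) :
    (L.foldr (fun x y => prefixOp x y) (false, true)).1 = true ↔
      ∃ k : Fin L.length, (L.get k).1 = true ∧
        ∀ m : Fin L.length, (m : ℕ) < (k : ℕ) → (L.get m).2 = true := by
  induction L with
  | nil => simp
  | cons a t ih =>
    have h1 : ((a :: t).foldr (fun x y => prefixOp x y) (false, true)).1 = true ↔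
        a.1 = true ∨ (a.2 = true ∧ (t.foldr (fun x y => prefixOp x y) (false, true)).1 = true) := by
      simp [prefixOp]
    rw [h1, ih]
    constructor
    · rintro (h | ⟨h, k, hk, hm⟩)
      · exact ⟨⟨0, by simp⟩, h, fun m hm => absurd hm (Nat.not_lt_zero _)⟩
      · refine ⟨⟨k.1 + 1, by simp⟩, hk, ?_⟩
        rintro ⟨_ | m, hlt⟩ hmk
        · exact h
        · exact hm ⟨m, by simpa using hlt⟩ (by simpa using hmk)
    · rintro ⟨⟨_ | k, hlt⟩, hk, hm⟩
      · exact Or.inl hk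
      · refine Or.inr ⟨hm ⟨0, by simp⟩ (by simp), ⟨k, by simpa using hlt⟩, hk, ?_⟩
        intro m hmk
        exact hm ⟨m.1 + 1, by simp⟩ (by simpa using hmk)
end

section
/- For every full binary tree t over α, the fully serial (left-comb) tree built on the leaf list of t is related to t by the reflexive–transitive closure of the regroup relation R. Consequently, any two full binary trees with the same leaf list are connected by a finite sequence of regroup operations, so iterative regrouping starting from a fully serial backbone can reach every structurally valid backbone configuration on the given inputs. -/
/-- Full binary trees over `α`. -/
inductive T (α : Type*) where
  | leaf : α → T α
  | node : T α → T α → T α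

/-- In-order list of leaves of a tree. -/
def T.leaves {α : Type*} : T α → List α
  | .leaf a => [a]
  | .node l r => l.leaves ++ r.leaves

/-- The regroup (rotation) relation on full binary trees. -/
inductive R {α : Type*} : T α → T α → Prop
  | assocL (x y z : T α) : R (.node (.node x y) z) (.node x (.node y z))
  | assocR (x y z : T α) : R (.node x (.node y z)) (.node (.node x y) z)
  | congL {l l' : T α} (r : T α) : R l l' → R (.node l r) (.node l' r)
  | congR (l : T α) {r r' : T α} : R r r' → R (.node l r) (.node l r')

/-- The fully serial (left-comb) tree on the nonempty list `a :: as`: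
`serial (a :: as) = List.foldl (fun t b => node t (leaf b)) (leaf a) as`. -/
def serial {α : Type*} (a : α) (as : List α) : T α :=
  as.foldl (fun t b => T.node t (T.leaf b)) (T.leaf a)

theorem T.leaves_ne_nil {α : Type*} (t : T α) : t.leaves ≠ [] := by
  induction t with
  | leaf a => simp [T.leaves]
  | node l r ihl ihr => simp [T.leaves, ihl]

theorem R.symm' {α : Type*} {s t : T α} (h : R s t) : R t s := by
  induction h with
  | assocL x y z => exact R.assocR x y z
  | assocR x y z => exact R.assocL x y z
  | congL r _ ih => exact R.congL r ih
  | congR l _ ih => exact R.congR l ih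

theorem R.star_congL {α : Type*} {s t : T α} (r : T α) (h : Relation.ReflTransGen R s t) :
    Relation.ReflTransGen R (T.node s r) (T.node t r) :=
  Relation.ReflTransGen.lift (fun x => T.node x r) (fun _ _ hxy => R.congL r hxy) _ _ h

/-- Appending the leaves of `r` one by one to `t` reaches `node t r`. -/
theorem foldl_reaches {α : Type*} (r : T α) : ∀ t : T α,
    Relation.ReflTransGen R (r.leaves.foldl (fun t b => T.node t (T.leaf b)) t) (T.node t r) := by
  induction r with
  | leaf a => intro t; exact Relation.ReflTransGen.refl
  | node l r ihl ihr =>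
    intro t
    rw [T.leaves, List.foldl_append]
    exact ((ihr _).trans (R.star_congL r (ihl t))).tail (R.assocL t l r)

theorem serial_reaches {α : Type*} (t : T α) : ∀ (a : α) (as : List α), t.leaves = a :: as →
    Relation.ReflTransGen R (serial a as) t := by
  induction t with
  | leaf b =>
    intro a as h
    simp only [T.leaves, List.cons.injEq] at h
    obtain ⟨rfl, rfl⟩ := h
    exact Relation.ReflTransGen.refl
  | node l r ihl ihr =>
    intro a as h
    obtain ⟨b, bs, hb⟩ := List.exists_cons_of_ne_nil l.leaves_ne_nil
    rw [T.leaves, hb, List.cons_append, List.cons.injEq] at h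
    obtain ⟨rfl, rfl⟩ := h
    rw [serial, List.foldl_append]
    exact (foldl_reaches r _).trans (R.star_congL r (ihl b bs hb))

theorem serial_reaches_and_connected {α : Type*} :
    (∀ (t : T α) (a : α) (as : List α), t.leaves = a :: as →
      Relation.ReflTransGen R (serial a as) t) ∧
    (∀ t₁ t₂ : T α, t₁.leaves = t₂.leaves →
      Relation.ReflTransGen R t₁ t₂) := by
  refine ⟨serial_reaches, fun t₁ t₂ h => ?_⟩
  obtain ⟨a, as, ha⟩ := List.exists_cons_of_ne_nil t₁.leaves_ne_nil
  have h1 := serial_reaches t₁ a as ha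
  have h2 := serial_reaches t₂ a as (h ▸ ha)
  refine Relation.ReflTransGen.trans ?_ h2
  have key : ∀ {x y : T α}, Relation.ReflTransGen R x y → Relation.ReflTransGen R y x := by
    intro x y hxy
    induction hxy with
    | refl => exact Relation.ReflTransGen.refl
    | tail _ hbc ih => exact Relation.ReflTransGen.head hbc.symm' ih
  exact key h1
end
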